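/- Let W be a nonnegative integer-valued random variable with mean μ ∈ (0,∞), and let W^s, defined on the same probability space, have the W-size-biased distribution. Let a < μ be an integer, λ = μ − a, and let k be an integer with k > λ and k ≥ 2. Then |P(W − a ≥ k)/F̄_λ(k) − 1| ≤ C1(λ,k)·{ μ·E|W + 1 − W^s| + |μ − λ| } + P(W − a ≤ −2). -/

import Mathlib

open MeasureTheory ProbabilityTheory Finset Real

/-- Poisson point probability `π_j(λ) = e^{-λ} λ^j / j!`. -/
noncomputable def poissonPMF (l : ℝ) (j : ℕ) : ℝ := Real.exp (-l) * l ^ j / (Nat.factorial j)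

/-- Poisson CDF `F_λ(j) = Σ_{i=0}^{j} π_i(λ)`. -/
noncomputable def poissonCDF (l : ℝ) (j : ℕ) : ℝ := ∑ i ∈ Finset.range (j + 1), poissonPMF l i

/-- Poisson right tail `F̄_λ(j) = Σ_{i=j}^{∞} π_i(λ)`. -/
noncomputable def poissonTail (l : ℝ) (j : ℕ) : ℝ := ∑' i : ℕ, poissonPMF l (j + i)

/-- `C0(λ,k) = F_λ(k-1)/(k·π_k(λ))`. -/
noncomputable def SteinC0 (l : ℝ) (k : ℕ) : ℝ := poissonCDF l (k - 1) / (k * poissonPMF l k)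

/-- `C1(λ,k)`. -/
noncomputable def SteinC1 (l : ℝ) (k : ℕ) : ℝ :=
  SteinC0 l k * (1 - min (poissonCDF l (k - 2) * l / ((k - 1) * poissonCDF l (k - 1)))
    (poissonTail l (k + 1) * k / (poissonTail l k * l)))

/-- `C2(λ,k)`. -/
noncomputable def SteinC2 (l : ℝ) (k : ℕ) : ℝ :=
  SteinC0 l k * (2 - poissonCDF l (k - 2) * l / ((k - 1) * poissonCDF l (k - 1))
    - poissonTail l (k + 1) * k / (poissonTail l k * l))

/-- `f` solves the Poisson–Stein equation for the indicator of `[k,∞)`, with `f 0 = f 1`. -/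
def IsSteinSolution (l : ℝ) (k : ℕ) (f : ℕ → ℝ) : Prop :=
  f 0 = f 1 ∧ ∀ j : ℕ, l * f (j + 1) - (j : ℝ) * f j =
    (if k ≤ j then (1 : ℝ) else 0) - poissonTail l k

/-!
On the positive integers, the Poisson–Stein equation for `[k,∞)`, normalized by `-F̄_λ(k)`, is
solved by `C0(λ,j)` for `j ≤ k` and by a multiple of `F̄_λ(j) / (j π_j(λ))` for `j ≥ k`. The first
branch is increasing and convex, the second decreasing and convex, so the largest increments are
the two adjacent to `k`; their maximum is `C1(λ,k)`. As `λ ≤ k`, it is at least `1 / (2λ)`, which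
leaves room to extend the solution to `0` and `-1` without enlarging its increments. With the value
`0` below `-1`, the Stein equation fails only at the integers `j ≤ -2`, by at most `1`.

For `Z = W - a`, the size-bias identity turns `E[λ φ(Z+1) - Z φ(Z)]` into
`μ E[φ(W-a+1) - φ(W^s-a)] - a E[φ(Z+1) - φ(Z)]`, and both expectations are controlled by the
Lipschitz constant `C1(λ,k)` of `φ`.
-/

section Poisson

variable {l : ℝ}

lemma poissonPMF_pos (hl : 0 < l) (j : ℕ) : 0 < poissonPMF l j := by
  unfold _root_.poissonPMF
  positivity

lemma succ_mul_poissonPMF_succ (l : ℝ) (j : ℕ) :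
    ((j + 1 : ℕ) : ℝ) * poissonPMF l (j + 1) = l * poissonPMF l j := by
  unfold _root_.poissonPMF
  rw [Nat.factorial_succ, pow_succ]
  push_cast
  field_simp

lemma hasSum_poissonPMF (hl : 0 ≤ l) : HasSum (poissonPMF l) 1 :=
  hasSum_one_poissonMeasure ⟨l, hl⟩

lemma hasSum_poissonTail (hl : 0 ≤ l) (j : ℕ) :
    HasSum (fun i => poissonPMF l (j + i)) (poissonTail l j) :=
  ((hasSum_poissonPMF hl).summable.comp_injective (add_right_injective j)).hasSum

lemma poissonTail_pos (hl : 0 < l) (j : ℕ) : 0 < poissonTail l j :=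
  (hasSum_poissonTail hl.le j).summable.tsum_pos (fun _ => (poissonPMF_pos hl _).le) 0
    (poissonPMF_pos hl _)

lemma poissonCDF_pos (hl : 0 < l) (j : ℕ) : 0 < poissonCDF l j :=
  Finset.sum_pos (fun i _ => poissonPMF_pos hl i) ⟨0, by simp⟩

lemma poissonCDF_succ (l : ℝ) (j : ℕ) :
    poissonCDF l (j + 1) = poissonCDF l j + poissonPMF l (j + 1) :=
  Finset.sum_range_succ _ _

lemma poissonCDF_add_poissonTail (hl : 0 ≤ l) (j : ℕ) :
    poissonCDF l j + poissonTail l (j + 1) = 1 := by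
  have h := (hasSum_poissonPMF hl).summable.sum_add_tsum_nat_add (j + 1)
  simpa only [poissonCDF, poissonTail, (hasSum_poissonPMF hl).tsum_eq, add_comm (j + 1)] using h

lemma poissonTail_succ (hl : 0 ≤ l) (j : ℕ) :
    poissonTail l (j + 1) = poissonPMF l (j + 1) + poissonTail l (j + 2) := by
  linarith [poissonCDF_succ l j, poissonCDF_add_poissonTail hl j,
    poissonCDF_add_poissonTail hl (j + 1)]

end Poisson

section LowerBranch

variable {l : ℝ}

/-- The first and second differences of `C0(λ,·)` satisfy recursions of this form. -/
lemma nonneg_of_mul_succ_eq_mul_add {u v : ℕ → ℝ} (hl : 0 < l) (hv : ∀ j, 0 ≤ v j)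
    (h : ∀ j : ℕ, l * u (j + 1) = j * u j + v j) (j : ℕ) : 0 ≤ u (j + 1) := by
  refine (mul_nonneg_iff_of_pos_left hl).1 ?_
  induction j with
  | zero => simpa only [h, Nat.cast_zero, zero_mul, zero_add] using hv 0
  | succ j ih =>
    rw [h]
    have := (mul_nonneg_iff_of_pos_left hl).1 ih
    have := hv (j + 1)
    positivity

lemma SteinC0_succ (l : ℝ) (j : ℕ) :
    SteinC0 l (j + 1) = poissonCDF l j / (l * poissonPMF l j) := by
  rw [SteinC0, Nat.add_sub_cancel, ← succ_mul_poissonPMF_succ]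

lemma SteinC0_one (hl : 0 < l) : SteinC0 l 1 = 1 / l := by
  have := poissonPMF_pos hl 0
  rw [SteinC0_succ, poissonCDF, zero_add, Finset.sum_range_one]
  field_simp

lemma mul_SteinC0_succ (hl : 0 < l) (j : ℕ) :
    l * SteinC0 l (j + 1) = j * SteinC0 l j + 1 := by
  cases j with
  | zero => simp [SteinC0_one hl, hl.ne']
  | succ j =>
    have := poissonPMF_pos hl (j + 1)
    rw [SteinC0_succ l (j + 1), SteinC0_succ l j, poissonCDF_succ, ← succ_mul_poissonPMF_succ l j]
    field_simp

lemma SteinC0_nonneg (hl : 0 < l) (j : ℕ) : 0 ≤ SteinC0 l j := by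
  have := poissonCDF_pos hl (j - 1)
  have := poissonPMF_pos hl j
  unfold SteinC0
  positivity

lemma SteinC0_mono (hl : 0 < l) : Monotone (SteinC0 l) := by
  refine monotone_nat_of_le_succ fun j => sub_nonneg.1 ?_
  cases j with
  | zero => simpa [SteinC0] using SteinC0_nonneg hl 1
  | succ j =>
    refine nonneg_of_mul_succ_eq_mul_add (u := fun j => SteinC0 l (j + 1) - SteinC0 l j) hl
      (fun j => SteinC0_nonneg hl (j + 1)) (fun j => ?_) j
    have h := mul_SteinC0_succ hl (j + 1)
    push_cast at h
    linarith [mul_SteinC0_succ hl j]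

lemma SteinC0_sub_mono (hl : 0 < l) :
    Monotone fun j => SteinC0 l (j + 2) - SteinC0 l (j + 1) := by
  refine monotone_nat_of_le_succ fun j => sub_nonneg.1 ?_
  refine nonneg_of_mul_succ_eq_mul_add
    (u := fun j => SteinC0 l (j + 2) - SteinC0 l (j + 1) - (SteinC0 l (j + 1) - SteinC0 l j))
    (v := fun j => 2 * (SteinC0 l (j + 2) - SteinC0 l (j + 1))) hl
    (fun j => by linarith [SteinC0_mono hl (Nat.le_succ (j + 1))]) (fun j => ?_) j
  have h₁ := mul_SteinC0_succ hl (j + 1)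
  have h₂ := mul_SteinC0_succ hl (j + 2)
  push_cast at h₁ h₂
  linarith [mul_SteinC0_succ hl j]

lemma sub_mul_SteinC0_succ_le_one (hl : 0 < l) (j : ℕ) : (l - j) * SteinC0 l (j + 1) ≤ 1 := by
  have h := mul_le_mul_of_nonneg_left (SteinC0_mono hl (Nat.le_succ j)) (Nat.cast_nonneg (α := ℝ) j)
  linarith [mul_SteinC0_succ hl j]

lemma one_div_two_mul_le_SteinC0_sub (hl : 0 < l) {j : ℕ} (hj : l ≤ j + 2) :
    1 / (2 * l) ≤ SteinC0 l (j + 2) - SteinC0 l (j + 1) := by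
  have hrec := mul_SteinC0_succ hl (j + 1)
  have hle := sub_mul_SteinC0_succ_le_one hl j
  have hnonneg := mul_nonneg (sub_nonneg.2 hj) (SteinC0_nonneg hl (j + 1))
  push_cast at hrec
  rw [div_le_iff₀ (by positivity)]
  linarith

end LowerBranch

section UpperBranch

variable {l : ℝ}

/-- The ratio `F̄_λ(j) / (j π_j(λ))`, the tail counterpart of `C0(λ,j) = F_λ(j-1) / (j π_j(λ))`.
It is a multiple of the solution of the Poisson–Stein equation for `[k,∞)` at the points `j ≥ k`,
and has the junk value `0` at `j = 0`. -/
noncomputable def poissonTailRatio (l : ℝ) (j : ℕ) : ℝ := poissonTail l j / (j * poissonPMF l j)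

lemma poissonTailRatio_nonneg (hl : 0 < l) (j : ℕ) : 0 ≤ poissonTailRatio l j := by
  have := poissonTail_pos hl j
  have := poissonPMF_pos hl j
  unfold poissonTailRatio
  positivity

lemma mul_poissonTailRatio_succ (hl : 0 < l) (j : ℕ) :
    l * poissonTailRatio l (j + 2) = (j + 1) * poissonTailRatio l (j + 1) - 1 := by
  have := poissonPMF_pos hl (j + 1)
  rw [poissonTailRatio, poissonTailRatio, poissonTail_succ hl.le j, succ_mul_poissonPMF_succ]
  push_cast
  field_simp
  ring

lemma poissonPMF_add_div (hl : 0 < l) (j i : ℕ) :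
    poissonPMF l (j + 1 + i) / ((j + 1 : ℕ) * poissonPMF l (j + 1)) =
      l ^ i / (j + 1).ascFactorial (i + 1) := by
  have hfac : ((j + 1 + i).factorial : ℝ) = j.factorial * (j + 1).ascFactorial (i + 1) := by
    rw [add_assoc, add_comm 1 i]
    exact_mod_cast (Nat.factorial_mul_ascFactorial j (i + 1)).symm
  have := Nat.ascFactorial_pos j (i + 1)
  unfold _root_.poissonPMF
  rw [hfac, Nat.factorial_succ, pow_add]
  push_cast
  field_simp

lemma hasSum_poissonTailRatio (hl : 0 < l) (j : ℕ) :
    HasSum (fun i => l ^ i / (j + 1).ascFactorial (i + 1)) (poissonTailRatio l (j + 1)) := by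
  simpa only [poissonTailRatio, poissonPMF_add_div hl] using
    (hasSum_poissonTail hl.le (j + 1)).div_const ((j + 1 : ℕ) * poissonPMF l (j + 1))

lemma one_div_ascFactorial_sub (j i : ℕ) :
    (1 : ℝ) / (j + 1).ascFactorial (i + 1) - 1 / (j + 2).ascFactorial (i + 1) =
      (i + 1) / (j + 1).ascFactorial (i + 2) := by
  have hlast : ((j + 1).ascFactorial (i + 2) : ℝ) =
      (j + 1 + (i + 1)) * (j + 1).ascFactorial (i + 1) :=
    mod_cast Nat.ascFactorial_succ
  have hfirst : ((j + 1).ascFactorial (i + 2) : ℝ) = (j + 1) * (j + 2).ascFactorial (i + 1) :=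
    hlast.trans (mod_cast (Nat.succ_ascFactorial (j + 1) (i + 1)).symm)
  have h₁ : (1 : ℝ) / (j + 1).ascFactorial (i + 1) =
      (j + 1 + (i + 1)) / (j + 1).ascFactorial (i + 2) := by
    rw [hlast]
    field_simp
  have h₂ : (1 : ℝ) / (j + 2).ascFactorial (i + 1) =
      (j + 1) / (j + 1).ascFactorial (i + 2) := by
    rw [hfirst]
    field_simp
  rw [h₁, h₂]
  ring

lemma hasSum_poissonTailRatio_sub (hl : 0 < l) (j : ℕ) :
    HasSum (fun i : ℕ => l ^ i * ((i + 1) / (j + 1).ascFactorial (i + 2)))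
      (poissonTailRatio l (j + 1) - poissonTailRatio l (j + 2)) := by
  simpa only [← one_div_ascFactorial_sub, mul_sub, mul_one_div] using
    (hasSum_poissonTailRatio hl j).sub (hasSum_poissonTailRatio hl (j + 1))

lemma poissonTailRatio_succ_le (hl : 0 < l) (j : ℕ) :
    poissonTailRatio l (j + 2) ≤ poissonTailRatio l (j + 1) :=
  sub_nonneg.1 <| (hasSum_poissonTailRatio_sub hl j).nonneg fun _ => by positivity

lemma poissonTailRatio_succ_antitone (hl : 0 < l) :
    Antitone fun j => poissonTailRatio l (j + 1) :=
  antitone_nat_of_succ_le (poissonTailRatio_succ_le hl)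

lemma poissonTailRatio_sub_antitone (hl : 0 < l) :
    Antitone fun j => poissonTailRatio l (j + 1) - poissonTailRatio l (j + 2) := by
  intro i j hij
  refine hasSum_le (fun m => ?_) (hasSum_poissonTailRatio_sub hl j)
    (hasSum_poissonTailRatio_sub hl i)
  have : 0 < (i + 1).ascFactorial (m + 2) := Nat.ascFactorial_pos _ _
  gcongr

lemma SteinC0_eq_mul_poissonTailRatio (hl : 0 < l) (k : ℕ) :
    SteinC0 l k = poissonCDF l (k - 1) / poissonTail l k * poissonTailRatio l k := by
  have := poissonTail_pos hl k
  rw [SteinC0, poissonTailRatio]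
  field_simp

end UpperBranch

section SteinSolution

variable {l : ℝ} {j k : ℕ}

/-- The bounded solution on the positive integers of the Poisson–Stein equation with right-hand side
`1 - 1_{[k,∞)} / F̄_λ(k)`, that is, the usual solution for `[k,∞)` divided by `-F̄_λ(k)`.
Its value at `0` is irrelevant. -/
noncomputable def tailSteinSolution (l : ℝ) (k j : ℕ) : ℝ :=
  if j ≤ k then SteinC0 l j else poissonCDF l (k - 1) / poissonTail l k * poissonTailRatio l j

lemma tailSteinSolution_of_le (h : j ≤ k) : tailSteinSolution l k j = SteinC0 l j :=
  if_pos h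

lemma tailSteinSolution_of_ge (hl : 0 < l) (h : k ≤ j) :
    tailSteinSolution l k j =
      poissonCDF l (k - 1) / poissonTail l k * poissonTailRatio l j := by
  rcases h.eq_or_lt with rfl | h
  · rw [tailSteinSolution_of_le le_rfl, SteinC0_eq_mul_poissonTailRatio hl]
  · exact if_neg h.not_ge

lemma tailSteinSolution_one (hl : 0 < l) (hk : 1 ≤ k) : tailSteinSolution l k 1 = 1 / l := by
  rw [tailSteinSolution_of_le hk, SteinC0_one hl]

lemma tailSteinSolution_equation (hl : 0 < l) (hk : 1 ≤ k) (j : ℕ) :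
    l * tailSteinSolution l k (j + 2) - (j + 1) * tailSteinSolution l k (j + 1) =
      1 - (if k ≤ j + 1 then 1 else 0) / poissonTail l k := by
  rcases lt_or_ge (j + 1) k with h | h
  · have hrec := mul_SteinC0_succ hl (j + 1)
    rw [tailSteinSolution_of_le h, tailSteinSolution_of_le h.le, if_neg h.not_ge, hrec]
    push_cast
    ring
  · have htail := poissonTail_pos hl k
    have hcdf : poissonCDF l (k - 1) = 1 - poissonTail l k := by
      have := poissonCDF_add_poissonTail hl.le (k - 1)
      rw [Nat.sub_add_cancel hk] at this
      linarith
    rw [tailSteinSolution_of_ge hl (by omega), tailSteinSolution_of_ge hl h, if_pos h, hcdf,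
      mul_left_comm, mul_poissonTailRatio_succ hl]
    field_simp
    ring

lemma tailSteinSolution_mem_Icc (hl : 0 < l) (hk : 1 ≤ k) (j : ℕ) :
    tailSteinSolution l k (j + 1) ∈ Set.Icc 0 (SteinC0 l k) := by
  have hcoeff : 0 ≤ poissonCDF l (k - 1) / poissonTail l k :=
    (div_pos (poissonCDF_pos hl _) (poissonTail_pos hl k)).le
  rcases le_total (j + 1) k with h | h
  · rw [tailSteinSolution_of_le h]
    exact ⟨SteinC0_nonneg hl _, SteinC0_mono hl h⟩
  · obtain ⟨k, rfl⟩ := Nat.exists_eq_add_of_le' hk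
    rw [tailSteinSolution_of_ge hl h, SteinC0_eq_mul_poissonTailRatio hl]
    exact ⟨mul_nonneg hcoeff (poissonTailRatio_nonneg hl _), mul_le_mul_of_nonneg_left
      (poissonTailRatio_succ_antitone hl (Nat.le_of_succ_le_succ h)) hcoeff⟩

lemma SteinC0_mul_poissonCDF_ratio (hl : 0 < l) (k : ℕ) :
    SteinC0 l (k + 2) * (poissonCDF l k * l / ((k + 1) * poissonCDF l (k + 1))) =
      SteinC0 l (k + 1) := by
  have := poissonCDF_pos hl (k + 1)
  have := poissonPMF_pos hl (k + 1)
  rw [SteinC0_succ l (k + 1), SteinC0_succ l k, ← succ_mul_poissonPMF_succ l k]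
  push_cast
  field_simp

lemma SteinC0_mul_poissonTail_ratio (hl : 0 < l) (hk : k ≠ 0) :
    SteinC0 l k * (poissonTail l (k + 1) * k / (poissonTail l k * l)) =
      poissonCDF l (k - 1) / poissonTail l k * poissonTailRatio l (k + 1) := by
  have := poissonTail_pos hl k
  have := poissonPMF_pos hl k
  rw [SteinC0, poissonTailRatio, succ_mul_poissonPMF_succ l k]
  field_simp

lemma SteinC1_eq_max (hl : 0 < l) (hk : 2 ≤ k) :
    SteinC1 l k = max (tailSteinSolution l k k - tailSteinSolution l k (k - 1))
      (tailSteinSolution l k k - tailSteinSolution l k (k + 1)) := by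
  rw [tailSteinSolution_of_le le_rfl, tailSteinSolution_of_le (Nat.sub_le k 1),
    tailSteinSolution_of_ge hl (Nat.le_succ k), max_sub_sub_left, SteinC1, mul_one_sub,
    mul_min_of_nonneg _ _ (SteinC0_nonneg hl k), SteinC0_mul_poissonTail_ratio hl (by omega)]
  obtain ⟨k, rfl⟩ := Nat.exists_eq_add_of_le' hk
  have hcast : ((k + 2 : ℕ) : ℝ) - 1 = k + 1 := by
    push_cast
    ring
  have hpred : SteinC0 l (k + 2 - 1) = _ := (SteinC0_mul_poissonCDF_ratio hl k).symm
  rw [hcast, Nat.add_sub_cancel, hpred]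
  rfl

lemma one_div_two_mul_le_SteinC1 (hl : 0 < l) (hk : 2 ≤ k) (hlk : l ≤ k) :
    1 / (2 * l) ≤ SteinC1 l k := by
  obtain ⟨k, rfl⟩ := Nat.exists_eq_add_of_le' hk
  rw [SteinC1_eq_max hl hk, tailSteinSolution_of_le le_rfl, tailSteinSolution_of_le (by omega)]
  exact le_max_of_le_left (one_div_two_mul_le_SteinC0_sub hl (mod_cast hlk))

lemma abs_tailSteinSolution_sub_le (hl : 0 < l) (hk : 2 ≤ k) (j : ℕ) :
    |tailSteinSolution l k (j + 2) - tailSteinSolution l k (j + 1)| ≤ SteinC1 l k := by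
  obtain ⟨k, rfl⟩ := Nat.exists_eq_add_of_le' hk
  rw [SteinC1_eq_max hl hk]
  rcases le_or_gt (j + 2) (k + 2) with h | h
  · rw [tailSteinSolution_of_le h, tailSteinSolution_of_le (by omega),
      tailSteinSolution_of_le le_rfl, tailSteinSolution_of_le (by omega),
      abs_of_nonneg (sub_nonneg.2 (SteinC0_mono hl (Nat.le_succ _)))]
    exact le_max_of_le_left (SteinC0_sub_mono hl (Nat.le_of_add_le_add_right h))
  · have hcoeff : 0 ≤ poissonCDF l (k + 2 - 1) / poissonTail l (k + 2) :=
      (div_pos (poissonCDF_pos hl _) (poissonTail_pos hl _)).le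
    refine le_max_of_le_right ?_
    rw [tailSteinSolution_of_ge hl (by omega), tailSteinSolution_of_ge hl (by omega),
      tailSteinSolution_of_ge hl le_rfl, tailSteinSolution_of_ge hl (by omega), abs_sub_comm,
      ← mul_sub, ← mul_sub,
      abs_of_nonneg (mul_nonneg hcoeff (sub_nonneg.2 (poissonTailRatio_succ_le hl j)))]
    exact mul_le_mul_of_nonneg_left (poissonTailRatio_sub_antitone hl (by omega)) hcoeff

end SteinSolution

section Extension

variable {l B D : ℝ} {f : ℕ → ℝ}

/-- Extension to `ℤ` of a function `f` on the positive integers with `f 1 = 1 / λ`.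
The values at `0` and `-1` satisfy the Stein equation `λ φ(j+1) - j φ(j) = 1` at `j = 0` and
`j = -1`, and keep all new increments within `1 / (2λ)`; below `-1` the function vanishes. -/
noncomputable def steinExtension (l : ℝ) (f : ℕ → ℝ) : ℤ → ℝ
  | .ofNat (j + 1) => f (j + 1)
  | .ofNat 0 => 1 / (2 * l) + 1 / (2 * (1 + l))
  | .negSucc 0 => 1 / (2 * (1 + l))
  | .negSucc (_ + 1) => 0

lemma steinExtension_one : steinExtension l f 1 = f 1 := rfl

lemma steinExtension_zero : steinExtension l f 0 = 1 / (2 * l) + 1 / (2 * (1 + l)) := rfl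

lemma steinExtension_neg_one : steinExtension l f (-1) = 1 / (2 * (1 + l)) := rfl

lemma steinExtension_of_le_neg_two : ∀ {j : ℤ}, j ≤ -2 → steinExtension l f j = 0
  | .negSucc (_ + 1), _ => rfl
  | .ofNat m, h => by
    have := Int.natCast_nonneg m
    rw [Int.ofNat_eq_natCast] at h
    omega

lemma one_div_two_mul_one_add_le (hl : 0 < l) : 1 / (2 * (1 + l)) ≤ 1 / (2 * l) := by
  gcongr
  linarith

lemma steinExtension_mem_Icc (hl : 0 < l) (hB : 1 / l ≤ B)
    (hf : ∀ j, f (j + 1) ∈ Set.Icc 0 B) (j : ℤ) : steinExtension l f j ∈ Set.Icc 0 B := by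
  have hle := one_div_two_mul_one_add_le hl
  have hhalf : 1 / (2 * l) + 1 / (2 * l) = 1 / l := by
    field_simp
    norm_num
  have hpos : 0 < 1 / (2 * (1 + l)) := by positivity
  rcases j with (_ | j) | (_ | j)
  · exact ⟨by simp only [steinExtension]; positivity, by simp only [steinExtension]; linarith⟩
  · exact hf j
  · exact ⟨hpos.le, by simp only [steinExtension]; linarith⟩
  · exact ⟨le_rfl, by simp only [steinExtension]; linarith⟩

lemma abs_steinExtension_sub_le (hl : 0 < l) (hf₁ : f 1 = 1 / l) (hD : 1 / (2 * l) ≤ D)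
    (hf : ∀ j, |f (j + 2) - f (j + 1)| ≤ D) (j : ℤ) :
    |steinExtension l f (j + 1) - steinExtension l f j| ≤ D := by
  have hle := one_div_two_mul_one_add_le hl
  have hpos : 0 < 1 / (2 * (1 + l)) := by positivity
  rcases j with (_ | j) | (_ | _ | j)
  · have hstep : f 1 - (1 / (2 * l) + 1 / (2 * (1 + l))) = 1 / (2 * l) - 1 / (2 * (1 + l)) := by
      rw [hf₁]
      ring
    change |f 1 - (1 / (2 * l) + 1 / (2 * (1 + l)))| ≤ D
    rw [hstep, abs_of_nonneg (sub_nonneg.2 hle)]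
    linarith
  · exact hf j
  · change |1 / (2 * l) + 1 / (2 * (1 + l)) - 1 / (2 * (1 + l))| ≤ D
    rwa [add_sub_cancel_right, abs_of_pos (by positivity)]
  · change |1 / (2 * (1 + l)) - 0| ≤ D
    rw [sub_zero, abs_of_pos hpos]
    exact hle.trans hD
  · change |(0 : ℝ) - 0| ≤ D
    rw [sub_zero, abs_zero]
    linarith

lemma steinExtension_equation {h : ℤ → ℝ} (hl : 0 < l) (hf₁ : f 1 = 1 / l)
    (hf : ∀ j : ℕ, l * f (j + 2) - (j + 1) * f (j + 1) = h (j + 1)) (hh : ∀ j ≤ 0, h j = 1)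
    {j : ℤ} (hj : -1 ≤ j) :
    l * steinExtension l f (j + 1) - j * steinExtension l f j = h j := by
  obtain rfl | rfl | ⟨m, rfl⟩ : j = -1 ∨ j = 0 ∨ ∃ m : ℕ, j = m + 1 := by
    rcases j with (_ | m) | (_ | m)
    · exact .inr (.inl rfl)
    · exact .inr (.inr ⟨m, rfl⟩)
    · exact .inl rfl
    · omega
  · have hzero : l * steinExtension l f 0 = 1 - 1 / (2 * (1 + l)) := by
      simp only [steinExtension_zero]
      field_simp
      ring
    rw [hh _ (by decide), neg_add_cancel, hzero, steinExtension_neg_one]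
    push_cast
    ring
  · rw [hh _ le_rfl, zero_add, steinExtension_one, hf₁, Int.cast_zero, zero_mul, sub_zero,
      mul_one_div_cancel hl.ne']
  · rw [← hf]
    exact_mod_cast rfl

lemma abs_steinExtension_residual_le_one (hl : 0 < l) {j : ℤ} (hj : j ≤ -2) :
    |l * steinExtension l f (j + 1) - j * steinExtension l f j - 1| ≤ 1 := by
  obtain rfl | hj := hj.eq_or_lt
  · have hle : l * (1 / (2 * (1 + l))) ≤ 1 := by
      rw [mul_one_div, div_le_one (by positivity)]
      linarith
    have hnonneg : 0 ≤ l * (1 / (2 * (1 + l))) := by positivity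
    rw [steinExtension_of_le_neg_two le_rfl, mul_zero, sub_zero, show (-2 : ℤ) + 1 = -1 from rfl,
      steinExtension_neg_one, abs_le]
    constructor <;> linarith
  · have hj' : j + 1 ≤ -2 := by omega
    simp [steinExtension_of_le_neg_two hj.le, steinExtension_of_le_neg_two hj']

end Extension

section TailSteinExtension

variable {l : ℝ} {k : ℕ}

/-- The test function `φ : ℤ → ℝ` of the proof: the solution of the Poisson–Stein equation for
`[k,∞)`, in the normalization of `tailSteinSolution`, extended to the negative integers. -/
noncomputable def tailSteinExtension (l : ℝ) (k : ℕ) : ℤ → ℝ :=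
  steinExtension l (tailSteinSolution l k)

lemma tailSteinExtension_mem_Icc (hl : 0 < l) (hk : 1 ≤ k) (j : ℤ) :
    tailSteinExtension l k j ∈ Set.Icc 0 (SteinC0 l k) := by
  have hB : 1 / l ≤ SteinC0 l k := SteinC0_one hl ▸ SteinC0_mono hl hk
  exact steinExtension_mem_Icc hl hB (tailSteinSolution_mem_Icc hl hk) j

lemma abs_tailSteinExtension_sub_le (hl : 0 < l) (hk : 2 ≤ k) (hlk : l ≤ k) (j : ℤ) :
    |tailSteinExtension l k (j + 1) - tailSteinExtension l k j| ≤ SteinC1 l k :=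
  abs_steinExtension_sub_le hl (tailSteinSolution_one hl (by omega))
    (one_div_two_mul_le_SteinC1 hl hk hlk) (abs_tailSteinSolution_sub_le hl hk) j

lemma abs_tailSteinExtension_residual_le (hl : 0 < l) (hk : 1 ≤ k) (j : ℤ) :
    |l * tailSteinExtension l k (j + 1) - j * tailSteinExtension l k j
      - (1 - (Set.Ici (k : ℤ)).indicator 1 j / poissonTail l k)| ≤
        (Set.Iic (-2)).indicator 1 j := by
  have hone (j : ℤ) (hj : j ≤ 0) :
      1 - (Set.Ici (k : ℤ)).indicator 1 j / poissonTail l k = 1 := by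
    rw [Set.indicator_of_notMem (by rw [Set.mem_Ici]; omega), zero_div, sub_zero]
  rcases le_or_gt j (-2) with hj | hj
  · rw [hone j (by omega), Set.indicator_of_mem (Set.mem_Iic.2 hj)]
    exact abs_steinExtension_residual_le_one hl hj
  · refine (abs_eq_zero.2 (sub_eq_zero.2 ?_)).trans_le (Set.indicator_nonneg (by simp) j)
    refine steinExtension_equation (h := fun j => 1 - (Set.Ici (k : ℤ)).indicator 1 j / _) hl
      (tailSteinSolution_one hl hk) (fun j => ?_) hone (by omega)
    have hmem : (j : ℤ) + 1 ∈ Set.Ici (k : ℤ) ↔ k ≤ j + 1 := by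
      rw [Set.mem_Ici]
      norm_cast
    simp only [tailSteinSolution_equation hl hk, Set.indicator_apply, hmem, Pi.one_apply]

end TailSteinExtension

section SizeBias

lemma abs_sub_le_mul_of_abs_succ_sub_le {φ : ℤ → ℝ} {D : ℝ} (h : ∀ j, |φ (j + 1) - φ j| ≤ D)
    (m n : ℤ) : |φ m - φ n| ≤ D * |(m : ℝ) - n| := by
  wlog hnm : n ≤ m generalizing m n
  · simpa only [abs_sub_comm] using this n m (le_of_not_ge hnm)
  have hnonneg (m : ℤ) (hm : n ≤ m) : (0 : ℝ) ≤ m - n := sub_nonneg.2 (mod_cast hm)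
  rw [abs_of_nonneg (hnonneg m hnm)]
  induction m, hnm using Int.leInduction with
  | base => simp
  | succ m hm ih =>
    push_cast
    linarith [abs_sub_le (φ (m + 1)) (φ m) (φ n), h m]

variable {Ω : Type*} [MeasurableSpace Ω] {P : Measure Ω}

lemma integral_comp_eq_tsum {ι : Type*} [Countable ι] [MeasurableSpace ι]
    [MeasurableSingletonClass ι] {X : Ω → ι} (hX : Measurable X) {g : ι → ℝ}
    (hg : Integrable (fun ω => g (X ω)) P) :
    ∫ ω, g (X ω) ∂P = ∑' i, P.real (X ⁻¹' {i}) * g i := by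
  have hgm : AEStronglyMeasurable g (P.map X) :=
    (measurable_of_countable g).aestronglyMeasurable
  rw [← integral_map hX.aemeasurable hgm,
    integral_countable ((integrable_map_measure hgm hX.aemeasurable).2 hg)]
  simp only [map_measureReal_apply hX (measurableSet_singleton _), smul_eq_mul]

/-- `Ws` has the `W`-size-biased distribution, where `μ` stands for the mean of `W`. -/
def IsSizeBiased (P : Measure Ω) (W Ws : Ω → ℕ) (μ : ℝ) : Prop :=
  ∀ w : ℕ, P.real (Ws ⁻¹' {w}) = w * P.real (W ⁻¹' {w}) / μ

variable {W Ws : Ω → ℕ} {μ : ℝ}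

lemma IsSizeBiased.integral_mul_comp_eq (hsize : IsSizeBiased P W Ws μ) (hμ : μ ≠ 0)
    (hW : Measurable W) (hWs : Measurable Ws) {g : ℕ → ℝ}
    (hgW : Integrable (fun ω => W ω * g (W ω)) P) (hgWs : Integrable (fun ω => g (Ws ω)) P) :
    ∫ ω, W ω * g (W ω) ∂P = μ * ∫ ω, g (Ws ω) ∂P := by
  rw [integral_comp_eq_tsum hWs hgWs, integral_comp_eq_tsum (g := fun w : ℕ => w * g w) hW hgW,
    ← tsum_mul_left]
  congr with w
  rw [hsize w]
  field_simp

lemma integrable_mul_comp_of_mem_Icc {Y : Ω → ℝ} (hY : Integrable Y P) {ι : Type*} [Countable ι]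
    [MeasurableSpace ι] [MeasurableSingletonClass ι] {X : Ω → ι} (hX : Measurable X) {g : ι → ℝ}
    {b B : ℝ} (hg : ∀ i, g i ∈ Set.Icc b B) : Integrable (fun ω => Y ω * g (X ω)) P :=
  hY.mul_bdd ((measurable_of_countable g).comp hX).aestronglyMeasurable
    (.of_forall fun ω => abs_le_max_abs_abs (hg (X ω)).1 (hg (X ω)).2)

section FiniteMeasure

variable [IsFiniteMeasure P]

lemma abs_integral_sub_integral_le_measureReal {F G : Ω → ℝ} (hF : Integrable F P)
    (hG : Integrable G P) {s : Set Ω} (hs : MeasurableSet s)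
    (h : ∀ ω, |F ω - G ω| ≤ s.indicator 1 ω) :
    |∫ ω, F ω ∂P - ∫ ω, G ω ∂P| ≤ P.real s := by
  rw [← integral_sub hF hG, ← integral_indicator_one hs]
  exact norm_integral_le_of_norm_le (f := fun ω => F ω - G ω)
    ((integrable_const 1).indicator hs) (.of_forall h)

lemma integrable_comp_of_mem_Icc {ι : Type*} [Countable ι] [MeasurableSpace ι]
    [MeasurableSingletonClass ι] {X : Ω → ι} (hX : Measurable X) {g : ι → ℝ} {b B : ℝ}
    (hg : ∀ i, g i ∈ Set.Icc b B) : Integrable (fun ω => g (X ω)) P :=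
  .of_mem_Icc b B ((measurable_of_countable g).comp hX).aemeasurable (.of_forall fun _ => hg _)

lemma IsSizeBiased.integral_stein_eq (hsize : IsSizeBiased P W Ws μ) (hμ : μ ≠ 0)
    (hW : Measurable W) (hWs : Measurable Ws) (hWint : Integrable (fun ω => (W ω : ℝ)) P) (a : ℤ)
    {φ : ℤ → ℝ} {b B : ℝ} (hφ : ∀ j, φ j ∈ Set.Icc b B) :
    ∫ ω, ((μ - a) * φ (W ω - a + 1) - (W ω - a : ℤ) * φ (W ω - a)) ∂P =
      μ * ∫ ω, (φ (W ω - a + 1) - φ (Ws ω - a)) ∂P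
        - a * ∫ ω, (φ (W ω - a + 1) - φ (W ω - a)) ∂P := by
  have hφW : Integrable (fun ω => φ (W ω - a)) P :=
    integrable_comp_of_mem_Icc (g := fun w : ℕ => φ (w - a)) hW fun _ => hφ _
  have hφW₁ : Integrable (fun ω => φ (W ω - a + 1)) P :=
    integrable_comp_of_mem_Icc (g := fun w : ℕ => φ (w - a + 1)) hW fun _ => hφ _
  have hφWs : Integrable (fun ω => φ (Ws ω - a)) P :=
    integrable_comp_of_mem_Icc (g := fun w : ℕ => φ (w - a)) hWs fun _ => hφ _
  have hWφW : Integrable (fun ω => W ω * φ (W ω - a)) P :=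
    integrable_mul_comp_of_mem_Icc (g := fun w : ℕ => φ (w - a)) hWint hW fun _ => hφ _
  have hZφW : Integrable (fun ω => W ω * φ (W ω - a) - a * φ (W ω - a)) P :=
    hWφW.sub (hφW.const_mul _)
  have hbias := hsize.integral_mul_comp_eq (g := fun w : ℕ => φ (w - a)) hμ hW hWs hWφW hφWs
  simp only [Int.cast_sub, Int.cast_natCast, sub_mul _ _ (φ (_ - a))]
  rw [integral_sub (hφW₁.const_mul _) hZφW, integral_sub hWφW (hφW.const_mul _),
    integral_sub hφW₁ hφWs, integral_sub hφW₁ hφW, integral_const_mul, integral_const_mul, hbias]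
  ring

end FiniteMeasure

variable [IsProbabilityMeasure P]

lemma IsSizeBiased.abs_integral_stein_le (hsize : IsSizeBiased P W Ws μ) (hμ : 0 < μ)
    (hW : Measurable W) (hWs : Measurable Ws) (hWint : Integrable (fun ω => (W ω : ℝ)) P)
    (hdiff : Integrable (fun ω => |(W ω : ℝ) + 1 - Ws ω|) P) (a : ℤ) {φ : ℤ → ℝ} {b B D : ℝ}
    (hφ : ∀ j, φ j ∈ Set.Icc b B) (hstep : ∀ j, |φ (j + 1) - φ j| ≤ D) :
    |∫ ω, ((μ - a) * φ (W ω - a + 1) - (W ω - a : ℤ) * φ (W ω - a)) ∂P| ≤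
      D * (μ * ∫ ω, |(W ω : ℝ) + 1 - Ws ω| ∂P + |(a : ℝ)|) := by
  have hcoupling : |∫ ω, (φ (W ω - a + 1) - φ (Ws ω - a)) ∂P| ≤
      D * ∫ ω, |(W ω : ℝ) + 1 - Ws ω| ∂P := by
    rw [← integral_const_mul]
    refine norm_integral_le_of_norm_le (f := fun ω => φ (W ω - a + 1) - φ (Ws ω - a))
      (hdiff.const_mul D) (.of_forall fun ω => ?_)
    have hlip := abs_sub_le_mul_of_abs_succ_sub_le hstep (W ω - a + 1) (Ws ω - a)
    push_cast at hlip
    rwa [show (W ω : ℝ) - a + 1 - (Ws ω - a) = W ω + 1 - Ws ω by ring] at hlip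
  have hshift : |∫ ω, (φ (W ω - a + 1) - φ (W ω - a)) ∂P| ≤ D := by
    simpa using norm_integral_le_of_norm_le_const (μ := P)
      (f := fun ω => φ (W ω - a + 1) - φ (W ω - a)) (.of_forall fun ω => hstep (W ω - a))
  rw [hsize.integral_stein_eq hμ.ne' hW hWs hWint a hφ]
  calc _ ≤ μ * |∫ ω, (φ (W ω - a + 1) - φ (Ws ω - a)) ∂P|
        + |(a : ℝ)| * |∫ ω, (φ (W ω - a + 1) - φ (W ω - a)) ∂P| := by
        simpa only [abs_mul, abs_of_pos hμ] using abs_sub (μ * _) (a * _)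
    _ ≤ μ * (D * ∫ ω, |(W ω : ℝ) + 1 - Ws ω| ∂P) + |(a : ℝ)| * D := by gcongr
    _ = _ := by ring

lemma abs_measureReal_div_poissonTail_sub_one_le {l : ℝ} {k : ℕ} (hl : 0 < l) (hk : 1 ≤ k)
    {Z : Ω → ℤ} (hZ : Measurable Z) (hZint : Integrable (fun ω => (Z ω : ℝ)) P) :
    |P.real (Z ⁻¹' Set.Ici (k : ℤ)) / poissonTail l k - 1| ≤
      |∫ ω, (l * tailSteinExtension l k (Z ω + 1) - Z ω * tailSteinExtension l k (Z ω)) ∂P|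
        + P.real (Z ⁻¹' Set.Iic (-2)) := by
  have hmem := tailSteinExtension_mem_Icc hl hk
  have hA : MeasurableSet (Z ⁻¹' Set.Ici (k : ℤ)) := hZ measurableSet_Ici
  have hstein : Integrable
      (fun ω => l * tailSteinExtension l k (Z ω + 1) - Z ω * tailSteinExtension l k (Z ω)) P :=
    ((integrable_comp_of_mem_Icc (hZ.add_const 1) hmem).const_mul l).sub
      (integrable_mul_comp_of_mem_Icc hZint hZ hmem)
  have hind : Integrable
      (fun ω => (Z ⁻¹' Set.Ici (k : ℤ)).indicator (1 : Ω → ℝ) ω / poissonTail l k) P :=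
    ((integrable_const 1).indicator hA).div_const _
  have hclose := abs_integral_sub_integral_le_measureReal ((integrable_const 1).sub hind) hstein
    (hZ measurableSet_Iic) fun ω =>
      (abs_sub_comm _ _).trans_le (abs_tailSteinExtension_residual_le hl hk (Z ω))
  simp only [Pi.sub_apply] at hclose
  rw [integral_sub (integrable_const 1) hind, integral_div, integral_indicator_one hA,
    integral_const, probReal_univ, one_smul] at hclose
  rw [abs_sub_comm]
  exact sub_le_iff_le_add'.1 ((abs_sub_abs_le_abs_sub _ _).trans hclose)

end SizeBias

/-- Theorem 2 (size-biased version): moderate deviation bound via the size-biased coupling. -/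
theorem poisson_md_size_biased {Ω : Type*} [MeasurableSpace Ω]
    (P : Measure Ω) [IsProbabilityMeasure P]
    (W Ws : Ω → ℕ) (hWmeas : Measurable W) (hWsmeas : Measurable Ws)
    (μ : ℝ) (hμpos : 0 < μ) (hμ : μ = ∫ ω, (W ω : ℝ) ∂P)
    (hWint : Integrable (fun ω => (W ω : ℝ)) P)
    (hdiffint : Integrable (fun ω => |(W ω : ℝ) + 1 - (Ws ω : ℝ)|) P)
    (hsize : ∀ w : ℕ, (P {ω | Ws ω = w}).toReal = w * (P {ω | W ω = w}).toReal / μ)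
    (a : ℤ) (ha : (a : ℝ) < μ) (lam : ℝ) (hlam : lam = μ - a)
    (k : ℕ) (hk : 2 ≤ k) (hkl : lam < k) :
    |(P {ω | (k : ℤ) ≤ (W ω : ℤ) - a}).toReal / poissonTail lam k - 1| ≤
      SteinC1 lam k * (μ * (∫ ω, |(W ω : ℝ) + 1 - (Ws ω : ℝ)| ∂P) + |μ - lam|)
        + (P {ω | (W ω : ℤ) - a ≤ -2}).toReal := by
  have hl : 0 < lam := by linarith
  have hZ : Measurable fun ω => (W ω : ℤ) - a :=
    (measurable_of_countable fun w : ℕ => (w : ℤ) - a).comp hWmeas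
  have hZint : Integrable (fun ω => (((W ω : ℤ) - a : ℤ) : ℝ)) P := by
    push_cast
    exact hWint.sub (integrable_const _)
  have hstein := IsSizeBiased.abs_integral_stein_le hsize hμpos hWmeas hWsmeas hWint hdiffint a
    (tailSteinExtension_mem_Icc hl (one_le_two.trans hk))
    (abs_tailSteinExtension_sub_le hl hk hkl.le)
  rw [← hlam, show (a : ℝ) = μ - lam by linarith] at hstein
  exact (abs_measureReal_div_poissonTail_sub_one_le hl (one_le_two.trans hk) hZ hZint).trans
    (add_le_add_left hstein _)
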